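/- Assume s = 4, q = p, p ∤ (m/t), d | h, and a = 0. Then: if (d,l) = (1,1) then N_t = (p^{t−1} − 1)/4; if (d,l) = (1,2) then N_t = (1/4)·( p^{t−1} − 1 − (−1)^{i_0}·p^{(t−2)/2}·(p−1) ); if (d,l) = (1,4) then N_t = (1/4)·( p^{t−1} − 1 − (−1)^{i_0}·p^{(t−4)/4}·(p−1)·( p^{t/4} + 2·Re(π_4^{t/2}·i^{i_0}) ) ); if (d,l) = (2,1) then N_t = (p^{t−1} − 1)/2; if (d,l) = (2,2) then N_t = (1/2)·( p^{t−1} − 1 − (−1)^{i_0}·p^{(t−2)/2}·(p−1) ); if (d,l) = (4,1) then N_t = p^{t−1} − 1. -/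

import Mathlib

noncomputable section

open Complex Polynomial Classical

/-- `N_t(a,s,h)`: the number of elements `x` of the subfield `F_{q^t}` of `K = F_{q^m}`
with `Tr_{K/F}(x) = a` and `N_{K/F}(x) ∈ g^h·⟨g^s⟩`. -/
def NN (F K : Type*) [Field F] [Fintype F] [Field K] [Fintype K] [Algebra F K]
    (g : F) (s h t : ℕ) (a : F) : ℕ :=
  Nat.card {x : K // x ^ (Fintype.card F) ^ t = x ∧ Algebra.trace F K x = a ∧
    ∃ k : ℕ, Algebra.norm F x = g ^ (h + s * k)}

/-!
Let `χ` be a multiplicative and `ψ` a nontrivial additive character of `F`. The function sending a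
monic polynomial with roots `aᵢ` to `χ(∏ aᵢ) ψ(∑ aᵢ)` is multiplicative, and its `L`-series has only
the two terms `1 + G(χ, ψ) T`. Computing the logarithmic derivative through irreducible factors as
well gives the Hasse–Davenport relation `-G(χ ∘ N, ψ ∘ Tr) = (-G(χ, ψ)) ^ n` in degree `n`.

By orthogonality of characters, the number of elements with trace zero and norm in a given coset of
`s`-th powers is a combination of such Gauss sums, and a quartic `χ` satisfies
`G(χ, ψ) ^ 4 = q J(χ, χ) ^ 2`. An element of the subfield of degree `t` in an extension of degree
`m` has trace `(m / t) Tr` and norm `N ^ (m / t)`, which replaces `(s, h)` by `(s / d, i₀)`.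

Over the prime field, `J(χ, χ)` is a Gaussian integer of norm `p` with even imaginary part which
vanishes under the reduction `i ↦ g ^ f`. This determines it up to sign, and so
`J(χ, χ) ^ 2 = π₄ ^ 2`.
-/

section MonicPolynomials

open Finset.HasAntidiagonal (antidiagonal mem_antidiagonal)

variable {F M : Type*} [Field F] [Finite F] [AddCommMonoid M]

theorem finite_setOf_monic_natDegree_eq (F : Type*) [Field F] [Finite F] (n : ℕ) :
    {f : F[X] | f.Monic ∧ f.natDegree = n}.Finite :=
  Finite.of_equiv _ ((monicEquivDegreeLT n).trans (degreeLTEquiv F n).toEquiv).symm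

/-- The finite set of monic polynomials of degree `n` over a finite field. -/
def monicOfDegree (F : Type*) [Field F] [Finite F] (n : ℕ) : Finset F[X] :=
  (finite_setOf_monic_natDegree_eq F n).toFinset

@[simp]
theorem mem_monicOfDegree {n : ℕ} {f : F[X]} :
    f ∈ monicOfDegree F n ↔ f.Monic ∧ f.natDegree = n := by
  simp [monicOfDegree]

theorem monicOfDegree_zero : monicOfDegree F 0 = {1} := by
  ext f
  rw [mem_monicOfDegree, Finset.mem_singleton]
  exact ⟨fun h ↦ eq_one_of_monic_natDegree_zero h.1 h.2, by rintro rfl; simp⟩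

theorem sum_monicOfDegree_one {F : Type*} [Field F] [Fintype F] (G : F[X] → M) :
    ∑ f ∈ monicOfDegree F 1, G f = ∑ a : F, G (X - C a) := by
  symm
  refine Finset.sum_bij (fun a _ ↦ X - C a) (fun a _ ↦ ?_) (fun a _ b _ h ↦ ?_)
    (fun f hf ↦ ?_) (fun _ _ ↦ rfl)
  · exact mem_monicOfDegree.2 ⟨monic_X_sub_C a, natDegree_X_sub_C a⟩
  · simpa using h
  · rw [mem_monicOfDegree] at hf
    exact ⟨-f.coeff 0, Finset.mem_univ _, by simpa using (hf.1.eq_X_add_C hf.2).symm⟩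

theorem add_mem_monicOfDegree {n : ℕ} {f r : F[X]} (hf : f ∈ monicOfDegree F n)
    (hr : r.degree < n) : f + r ∈ monicOfDegree F n := by
  rw [mem_monicOfDegree] at hf ⊢
  have hlt : r.degree < f.degree := by rwa [degree_eq_natDegree hf.1.ne_zero, hf.2]
  exact ⟨hf.1.add_of_left hlt, by rw [natDegree_add_eq_left_of_degree_lt hlt, hf.2]⟩

theorem sum_monicOfDegree_add {n : ℕ} {r : F[X]} (hr : r.degree < n) (G : F[X] → M) :
    ∑ f ∈ monicOfDegree F n, G (f + r) = ∑ f ∈ monicOfDegree F n, G f :=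
  Finset.sum_bij' (fun f _ ↦ f + r) (fun f _ ↦ f + -r)
    (fun _ hf ↦ add_mem_monicOfDegree hf hr)
    (fun _ hf ↦ add_mem_monicOfDegree hf (by rwa [degree_neg]))
    (by simp) (by simp) (by simp)

/-- The finite set of monic divisors of `f`, empty by convention when `f = 0`. -/
def monicDivisors (f : F[X]) : Finset F[X] :=
  {Q ∈ (Finset.range (f.natDegree + 1)).biUnion (monicOfDegree F) | Q ∣ f ∧ f ≠ 0}

theorem mem_monicDivisors {f Q : F[X]} (hf : f ≠ 0) :
    Q ∈ monicDivisors f ↔ Q.Monic ∧ Q ∣ f := by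
  simp only [monicDivisors, Finset.mem_filter, Finset.mem_biUnion, Finset.mem_range,
    mem_monicOfDegree]
  constructor
  · rintro ⟨⟨_, _, hQ, _⟩, hQf, _⟩
    exact ⟨hQ, hQf⟩
  · rintro ⟨hQ, hQf⟩
    exact ⟨⟨_, Nat.lt_succ_of_le (natDegree_le_of_dvd hQf hf), hQ, rfl⟩, hQf, hf⟩

theorem sum_monicOfDegree_sum_monicDivisors (n : ℕ) (H : F[X] → F[X] → M) :
    ∑ f ∈ monicOfDegree F n, ∑ Q ∈ monicDivisors f, H Q (f /ₘ Q) =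
      ∑ kl ∈ antidiagonal n, ∑ Q ∈ monicOfDegree F kl.1, ∑ R ∈ monicOfDegree F kl.2,
        H Q R := by
  simp only [← Finset.sum_product', Finset.sum_sigma']
  refine Finset.sum_bij' (fun x _ ↦ ⟨(x.2.natDegree, (x.1 /ₘ x.2).natDegree), (x.2, x.1 /ₘ x.2)⟩)
    (fun y _ ↦ ⟨y.2.1 * y.2.2, y.2.1⟩) ?_ ?_ ?_ ?_ ?_
  · rintro ⟨f, Q⟩ hfQ
    simp only [Finset.mem_sigma, mem_monicOfDegree] at hfQ
    obtain ⟨⟨hf, rfl⟩, hQ⟩ := hfQ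
    obtain ⟨hQm, R, rfl⟩ := (mem_monicDivisors hf.ne_zero).1 hQ
    have hR := hQm.of_mul_monic_left hf
    simp [mul_divByMonic_cancel_left _ hQm, hQm, hR, hQm.natDegree_mul hR]
  · rintro ⟨⟨k, l⟩, Q, R⟩ h
    simp only [Finset.mem_sigma, mem_antidiagonal, Finset.mem_product,
      mem_monicOfDegree] at h
    obtain ⟨rfl, ⟨hQ, rfl⟩, hR, rfl⟩ := h
    simp [mem_monicDivisors (hQ.mul hR).ne_zero, hQ, hQ.mul hR, hQ.natDegree_mul hR]
  · rintro ⟨f, Q⟩ hfQ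
    simp only [Finset.mem_sigma, mem_monicOfDegree] at hfQ
    obtain ⟨hQ, R, rfl⟩ := (mem_monicDivisors hfQ.1.1.ne_zero).1 hfQ.2
    simp [mul_divByMonic_cancel_left _ hQ]
  · rintro ⟨⟨k, l⟩, Q, R⟩ h
    simp only [Finset.mem_sigma, mem_antidiagonal, Finset.mem_product,
      mem_monicOfDegree] at h
    obtain ⟨rfl, ⟨hQ, rfl⟩, -, rfl⟩ := h
    simp [mul_divByMonic_cancel_left _ hQ]
  · simp

end MonicPolynomials

section VonMangoldt

open UniqueFactorizationMonoid

variable {F : Type*} [Field F]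

/-- The von Mangoldt function of `F[X]`: it is `deg P` at the positive powers of an irreducible
polynomial `P` and zero elsewhere. -/
def polyVonMangoldt (Q : F[X]) : ℕ :=
  if IsPrimePow Q then (radical Q).natDegree else 0

theorem polyVonMangoldt_irreducible_pow {P : F[X]} (hP : Irreducible P) {j : ℕ} (hj : j ≠ 0) :
    polyVonMangoldt (P ^ j) = P.natDegree := by
  rw [polyVonMangoldt, if_pos ⟨P, j, hP.prime, Nat.pos_of_ne_zero hj, rfl⟩,
    radical_pow_of_prime hP.prime hj, natDegree_eq_of_degree_eq degree_normalize]

theorem exists_irreducible_pow_eq_of_polyVonMangoldt_ne_zero {Q : F[X]} (hQ : Q.Monic)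
    (h : polyVonMangoldt Q ≠ 0) :
    ∃ P : F[X], ∃ j, P.Monic ∧ Irreducible P ∧ j ≠ 0 ∧ P ^ j = Q := by
  obtain ⟨P, j, hP, hj, rfl⟩ : IsPrimePow Q := by
    by_contra hQ
    exact h (if_neg hQ)
  exact ⟨normalize P, j, monic_normalize hP.ne_zero,
    (normalize_associated P).symm.irreducible hP.irreducible, hj.ne',
    eq_of_monic_of_associated
      ((monic_normalize hP.ne_zero).pow j) hQ (normalize_associated P).pow_pow⟩

theorem monic_irreducible_pow_inj {P Q : F[X]} (hP : P.Monic) (hPi : Irreducible P)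
    (hQ : Q.Monic) (hQi : Irreducible Q) {i j : ℕ} (hi : i ≠ 0) (h : P ^ i = Q ^ j) :
    P = Q ∧ i = j := by
  have hdvd : P ∣ Q := hPi.prime.dvd_of_dvd_pow (h ▸ dvd_pow_self P hi)
  obtain rfl : P = Q := eq_of_monic_of_associated hP hQ (hPi.associated_of_dvd hQi hdvd)
  exact ⟨rfl, pow_injective_of_not_isUnit hPi.not_isUnit hPi.ne_zero h⟩

theorem monic_irreducible_pow_dvd_iff_le_count {P f : F[X]} (hP : P.Monic) (hPi : Irreducible P)
    (hf : f ≠ 0) {j : ℕ} : P ^ j ∣ f ↔ j ≤ (normalizedFactors f).count P := by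
  rw [pow_dvd_iff_le_emultiplicity, le_emultiplicity_iff_replicate_le_normalizedFactors hPi hf,
    hP.normalize_eq_self, Multiset.le_count_iff_replicate_le]

theorem sum_count_normalizedFactors_mul_natDegree {f : F[X]} (hf : f.Monic) :
    ∑ P ∈ (normalizedFactors f).toFinset, (normalizedFactors f).count P * P.natDegree =
      f.natDegree := by
  have hdeg := natDegree_multiset_prod (normalizedFactors f) (zero_notMem_normalizedFactors f)
  rw [prod_normalizedFactors_eq hf.ne_zero, hf.normalize_eq_self,
    Finset.sum_multiset_map_count] at hdeg
  simpa only [smul_eq_mul] using hdeg.symm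

theorem sum_monicDivisors_polyVonMangoldt [Finite F] {f : F[X]} (hf : f.Monic) :
    ∑ Q ∈ monicDivisors f, polyVonMangoldt Q = f.natDegree := by
  set N := normalizedFactors f
  have hN {P : F[X]} : P ∈ N ↔ Irreducible P ∧ P.Monic ∧ P ∣ f :=
    Polynomial.mem_normalizedFactors_iff hf.ne_zero
  have hprimePow : ∑ x ∈ N.toFinset.sigma fun P ↦ Finset.Icc 1 (N.count P), x.1.natDegree =
      f.natDegree := by
    rw [← sum_count_normalizedFactors_mul_natDegree hf, Finset.sum_sigma]
    simp [N]
  rw [← hprimePow]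
  symm
  refine Finset.sum_of_injOn (fun x ↦ x.1 ^ x.2) ?_ ?_ ?_ ?_
  · rintro ⟨P, i⟩ hP ⟨Q, j⟩ hQ h
    simp only [Finset.coe_sigma, Set.mem_sigma_iff, Finset.mem_coe, Multiset.mem_toFinset, hN,
      Finset.mem_Icc] at hP hQ
    obtain ⟨rfl, rfl⟩ :=
      monic_irreducible_pow_inj hP.1.2.1 hP.1.1 hQ.1.2.1 hQ.1.1
        (Nat.one_le_iff_ne_zero.1 hP.2.1) h
    rfl
  · rintro ⟨P, j⟩ hP
    simp only [Finset.coe_sigma, Set.mem_sigma_iff, Finset.mem_coe, Multiset.mem_toFinset, hN,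
      Finset.mem_Icc] at hP
    exact (mem_monicDivisors hf.ne_zero).2 ⟨hP.1.2.1.pow j,
      (monic_irreducible_pow_dvd_iff_le_count hP.1.2.1 hP.1.1 hf.ne_zero).2 hP.2.2⟩
  · intro Q hQ hQN
    obtain ⟨hQ, hQf⟩ := (mem_monicDivisors hf.ne_zero).1 hQ
    by_contra hΛ
    obtain ⟨P, j, hP, hPi, hj, rfl⟩ := exists_irreducible_pow_eq_of_polyVonMangoldt_ne_zero hQ hΛ
    refine hQN ⟨⟨P, j⟩, ?_, rfl⟩
    simp only [Finset.coe_sigma, Set.mem_sigma_iff, Finset.mem_coe, Multiset.mem_toFinset, hN,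
      Finset.mem_Icc]
    exact ⟨⟨hPi, hP, (dvd_pow_self P hj).trans hQf⟩, Nat.one_le_iff_ne_zero.2 hj,
      (monic_irreducible_pow_dvd_iff_le_count hP hPi hf.ne_zero).1 hQf⟩
  · rintro ⟨P, j⟩ hP
    simp only [Finset.mem_sigma, Multiset.mem_toFinset, hN, Finset.mem_Icc] at hP
    exact (polyVonMangoldt_irreducible_pow hP.1.1 (Nat.one_le_iff_ne_zero.1 hP.2.1)).symm

end VonMangoldt

section MultiplicativeFunctions

open Finset.HasAntidiagonal (antidiagonal)

variable {F R : Type*} [Field F] [CommRing R]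

/-- A function on polynomials that is multiplicative on the monoid of monic polynomials; its values
at other polynomials are irrelevant. -/
structure IsMonicMultiplicative (w : F[X] → R) : Prop where
  map_one : w 1 = 1
  map_mul : ∀ {f g : F[X]}, f.Monic → g.Monic → w (f * g) = w f * w g

theorem IsMonicMultiplicative.map_pow {w : F[X] → R} (hw : IsMonicMultiplicative w) {f : F[X]}
    (hf : f.Monic) (n : ℕ) : w (f ^ n) = w f ^ n := by
  induction n with
  | zero => simp only [pow_zero, hw.map_one]
  | succ n ih => rw [pow_succ, hw.map_mul (hf.pow n) hf, ih, pow_succ]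

variable [Finite F]

/-- The sum of `w` over the monic polynomials of degree `n`: the `n`-th coefficient of the
`L`-series of `w`. -/
def monicSum (w : F[X] → R) (n : ℕ) : R :=
  ∑ f ∈ monicOfDegree F n, w f

/-- The sum of `Λ w` over the monic polynomials of degree `n`, where `Λ` is the von Mangoldt
function: the `n`-th coefficient of the logarithmic derivative of the `L`-series of `w`. -/
def vonMangoldtSum (w : F[X] → R) (n : ℕ) : R :=
  ∑ f ∈ monicOfDegree F n, polyVonMangoldt f * w f

theorem IsMonicMultiplicative.monicSum_zero {w : F[X] → R} (hw : IsMonicMultiplicative w) :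
    monicSum w 0 = 1 := by
  rw [monicSum, monicOfDegree_zero, Finset.sum_singleton, hw.map_one]

theorem vonMangoldtSum_zero (w : F[X] → R) : vonMangoldtSum w 0 = 0 := by
  simp [vonMangoldtSum, monicOfDegree_zero, polyVonMangoldt]

theorem IsMonicMultiplicative.nat_mul_monicSum {w : F[X] → R} (hw : IsMonicMultiplicative w)
    (n : ℕ) :
    n * monicSum w n = ∑ kl ∈ antidiagonal n, vonMangoldtSum w kl.1 * monicSum w kl.2 := by
  calc n * monicSum w n
      = ∑ f ∈ monicOfDegree F n, ∑ Q ∈ monicDivisors f, polyVonMangoldt Q * w f := by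
        rw [monicSum, Finset.mul_sum]
        refine Finset.sum_congr rfl fun f hfn ↦ ?_
        obtain ⟨hf, rfl⟩ := mem_monicOfDegree.1 hfn
        rw [← sum_monicDivisors_polyVonMangoldt hf, Nat.cast_sum, Finset.sum_mul]
    _ = ∑ f ∈ monicOfDegree F n, ∑ Q ∈ monicDivisors f,
          polyVonMangoldt Q * w Q * w (f /ₘ Q) := by
        refine Finset.sum_congr rfl fun f hfn ↦ Finset.sum_congr rfl fun Q hQf ↦ ?_
        have hf := (mem_monicOfDegree.1 hfn).1
        obtain ⟨hQ, T, rfl⟩ := (mem_monicDivisors hf.ne_zero).1 hQf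
        rw [mul_divByMonic_cancel_left _ hQ, hw.map_mul hQ (hQ.of_mul_monic_left hf), mul_assoc]
    _ = ∑ kl ∈ antidiagonal n, vonMangoldtSum w kl.1 * monicSum w kl.2 := by
        rw [sum_monicOfDegree_sum_monicDivisors n fun Q T ↦ polyVonMangoldt Q * w Q * w T]
        simp only [vonMangoldtSum, monicSum, Finset.sum_mul_sum]

-- Here the `L`-series is `1 + (monicSum w 1) T`, and this expands its logarithmic derivative.
theorem IsMonicMultiplicative.neg_vonMangoldtSum_eq_pow {w : F[X] → R}
    (hw : IsMonicMultiplicative w) (hvanish : ∀ n, 2 ≤ n → monicSum w n = 0) (n : ℕ) :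
    -vonMangoldtSum w (n + 1) = (-monicSum w 1) ^ (n + 1) := by
  induction n with
  | zero =>
    have h := hw.nat_mul_monicSum 1
    simp only [Finset.Nat.sum_antidiagonal_eq_sum_range_succ_mk, Finset.sum_range_succ,
      vonMangoldtSum_zero, hw.monicSum_zero] at h
    simpa using h.symm
  | succ n ih =>
    have h := hw.nat_mul_monicSum (n + 2)
    rw [hvanish _ (by omega), mul_zero, Finset.Nat.sum_antidiagonal_eq_sum_range_succ_mk,
      Finset.sum_range_succ, Finset.sum_range_succ, Finset.sum_eq_zero fun k hk ↦ ?_] at h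
    · rw [show n + 2 - (n + 1) = 1 by omega, Nat.sub_self, hw.monicSum_zero] at h
      rw [pow_succ, ← ih]
      linear_combination h
    · rw [hvanish _ (by have := Finset.mem_range.1 hk; omega), mul_zero]

end MultiplicativeFunctions

section HasseDavenport

open Module IntermediateField

variable {F R : Type*} [Field F] [CommRing R]

/-- The lift `χ ∘ N` of a multiplicative character of `F` to a finite extension `E`. -/
def normLift (E : Type*) [Field E] [Algebra F E] [FiniteDimensional F E] (χ : MulChar F R) :
    MulChar E R where
  toMonoidHom := χ.toMonoidHom.comp (Algebra.norm F)
  map_nonunit' x hx := by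
    obtain rfl : x = 0 := by simpa using hx
    exact (congrArg χ Algebra.norm_zero).trans χ.map_zero

@[simp]
theorem normLift_apply {E : Type*} [Field E] [Algebra F E] [FiniteDimensional F E]
    (χ : MulChar F R) (x : E) : normLift E χ x = χ (Algebra.norm F x) :=
  rfl

/-- The lift `ψ ∘ Tr` of an additive character of `F` to a finite extension `E`. -/
def traceLift (E : Type*) [Field E] [Algebra F E] (ψ : AddChar F R) : AddChar E R :=
  ψ.compAddMonoidHom (Algebra.trace F E).toAddMonoidHom

@[simp]
theorem traceLift_apply {E : Type*} [Field E] [Algebra F E] (ψ : AddChar F R) (x : E) :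
    traceLift E ψ x = ψ (Algebra.trace F E x) :=
  rfl

/-- The function on monic polynomials with `X - a ↦ χ(a) ψ(a)` and, more generally, sending a monic
polynomial with roots `aᵢ` to `χ(∏ aᵢ) ψ(∑ aᵢ)`; its `L`-series is that of the Gauss sum. -/
def gaussWeight (χ : MulChar F R) (ψ : AddChar F R) (f : F[X]) : R :=
  χ ((-1) ^ f.natDegree * f.coeff 0) * ψ (-f.nextCoeff)

theorem isMonicMultiplicative_gaussWeight (χ : MulChar F R) (ψ : AddChar F R) :
    IsMonicMultiplicative (gaussWeight χ ψ) where
  map_one := by simp [gaussWeight, nextCoeff]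
  map_mul {f g} hf hg := by
    unfold gaussWeight
    rw [hf.nextCoeff_mul hg, hf.natDegree_mul hg, mul_coeff_zero, neg_add,
      AddChar.map_add_eq_mul, pow_add, mul_mul_mul_comm, map_mul, mul_mul_mul_comm]

theorem monicSum_gaussWeight_one [Fintype F] (χ : MulChar F R) (ψ : AddChar F R) :
    monicSum (gaussWeight χ ψ) 1 = gaussSum χ ψ := by
  rw [monicSum, sum_monicOfDegree_one, gaussSum]
  simp [gaussWeight, nextCoeff_X_sub_C]

theorem gaussWeight_add_C_mul_X_pow (χ : MulChar F R) (ψ : AddChar F R) {n : ℕ} (hn : n ≠ 0)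
    {f : F[X]} (hf : f.natDegree = n + 1) (b : F) :
    gaussWeight χ ψ (f + C b * X ^ n) = ψ (-b) * gaussWeight χ ψ f := by
  have hdeg : (f + C b * X ^ n).natDegree = n + 1 := by
    rw [natDegree_add_eq_left_of_natDegree_lt, hf]
    exact (natDegree_C_mul_X_pow_le b n).trans_lt (by omega)
  have hcoeff : (f + C b * X ^ n).coeff 0 = f.coeff 0 := by simp [coeff_X_pow, hn.symm]
  have hnext : (f + C b * X ^ n).nextCoeff = f.nextCoeff + b := by
    rw [nextCoeff_of_natDegree_pos (by omega), nextCoeff_of_natDegree_pos (by omega), hdeg, hf]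
    simp
  rw [gaussWeight, gaussWeight, hdeg, hcoeff, hnext, hf, neg_add_rev, AddChar.map_add_eq_mul]
  ring

-- Adding `b X ^ (n - 1)` permutes the summands and multiplies each by `ψ (-b)`, not always `1`.
theorem monicSum_gaussWeight_eq_zero [Finite F] [IsDomain R] (χ : MulChar F R)
    {ψ : AddChar F R} (hψ : ψ ≠ 1) {n : ℕ} (hn : 2 ≤ n) : monicSum (gaussWeight χ ψ) n = 0 := by
  obtain ⟨n, rfl⟩ := Nat.exists_eq_add_of_le' (one_le_two.trans hn)
  obtain ⟨b, hb⟩ := AddChar.ne_one_iff.1 hψ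
  have hdeg : (C (-b) * X ^ n : F[X]).degree < (n + 1 : ℕ) :=
    (degree_C_mul_X_pow_le _ _).trans_lt (by exact_mod_cast n.lt_succ_self)
  have hshift : ψ b * monicSum (gaussWeight χ ψ) (n + 1) = monicSum (gaussWeight χ ψ) (n + 1) := by
    conv_rhs => rw [monicSum, ← sum_monicOfDegree_add hdeg]
    rw [monicSum, Finset.mul_sum]
    refine Finset.sum_congr rfl fun f hf ↦ ?_
    rw [gaussWeight_add_C_mul_X_pow χ ψ (by omega) (mem_monicOfDegree.1 hf).2, neg_neg]
  exact (mul_left_eq_self₀.1 hshift).resolve_left hb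

section

variable {E : Type*} [Field E] [Finite E] [Algebra F E]

theorem finrank_adjoin_mul_natDegree_minpoly (x : E) :
    finrank F⟮x⟯ E * (minpoly F x).natDegree = finrank F E := by
  rw [← adjoin.finrank (.of_finite F x), mul_comm, finrank_mul_finrank]

theorem gaussWeight_minpoly_pow_finrank (χ : MulChar F R) (ψ : AddChar F R) (x : E) :
    gaussWeight χ ψ (minpoly F x ^ finrank F⟮x⟯ E) =
      χ (Algebra.norm F x) * ψ (Algebra.trace F E x) := by
  have hx : IsIntegral F x := .of_finite F x
  have hnorm : Algebra.norm F (AdjoinSimple.gen F x) =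
      (-1) ^ (minpoly F x).natDegree * (minpoly F x).coeff 0 := by
    simpa only [adjoin.powerBasis_gen, adjoin.powerBasis_dim, minpoly_gen] using
      Algebra.PowerBasis.norm_gen_eq_coeff_zero_minpoly (adjoin.powerBasis hx)
  rw [(isMonicMultiplicative_gaussWeight χ ψ).map_pow (minpoly.monic hx),
    trace_eq_finrank_mul_minpoly_nextCoeff, Algebra.norm_eq_norm_adjoin, hnorm, gaussWeight,
    mul_pow, ← map_pow, ← AddChar.map_nsmul_eq_pow, nsmul_eq_mul]

theorem splits_map_of_natDegree_dvd_finrank [Finite F] {P : F[X]} (hP : Irreducible P)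
    (hdvd : P.natDegree ∣ finrank F E) : (P.map (algebraMap F E)).Splits := by
  have := Fintype.ofFinite E
  have hPX : P.map (algebraMap F E) ∣ X ^ Fintype.card E - X := by
    have h := Polynomial.map_dvd (algebraMap F E)
      (hP.natDegree_dvd_iff_dvd_X_pow_card_pow_sub_X.1 hdvd)
    rwa [← Module.natCard_eq_pow_finrank, Nat.card_eq_fintype_card, Polynomial.map_sub,
      Polynomial.map_pow, map_X] at h
  refine Splits.of_dvd ?_ (FiniteField.X_pow_card_sub_X_ne_zero E Fintype.one_lt_card) hPX
  rw [splits_iff_card_roots, FiniteField.roots_X_pow_card_sub_X,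
    FiniteField.X_pow_card_sub_X_natDegree_eq E Fintype.one_lt_card, Finset.card_val,
    Finset.card_univ]

end

variable {E : Type*} [Field E] [Fintype E] [Algebra F E]

theorem card_filter_minpoly_eq [Finite F] {P : F[X]} (hP : P.Monic) (hPi : Irreducible P)
    (hdvd : P.natDegree ∣ finrank F E) :
    ({x : E | minpoly F x = P} : Finset E).card = P.natDegree := by
  rw [← card_rootSet_eq_natDegree (PerfectField.separable_of_irreducible hPi)
    (splits_map_of_natDegree_dvd_finrank hPi hdvd), ← Set.toFinset_card]
  congr 1
  ext x
  rw [Finset.mem_filter_univ, Set.mem_toFinset, mem_rootSet]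
  exact ⟨fun h ↦ h ▸ ⟨minpoly.ne_zero (.of_finite F x), minpoly.aeval F x⟩,
    fun h ↦ (minpoly.eq_of_irreducible_of_monic hPi h.2 hP).symm⟩

theorem card_filter_minpoly_pow_finrank_eq [Finite F] {Q : F[X]}
    (hQ : Q ∈ monicOfDegree F (finrank F E)) :
    ({x : E | minpoly F x ^ finrank F⟮x⟯ E = Q} : Finset E).card = polyVonMangoldt Q := by
  have hirr (x : E) : Irreducible (minpoly F x) := minpoly.irreducible (.of_finite F x)
  rw [mem_monicOfDegree] at hQ
  by_cases hΛ : polyVonMangoldt Q = 0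
  · rw [hΛ, Finset.card_eq_zero, Finset.filter_eq_empty_iff]
    rintro x - rfl
    rw [polyVonMangoldt_irreducible_pow (hirr x) finrank_pos.ne'] at hΛ
    exact (hirr x).natDegree_pos.ne' hΛ
  obtain ⟨P, j, hP, hPi, hj, rfl⟩ := exists_irreducible_pow_eq_of_polyVonMangoldt_ne_zero hQ.1 hΛ
  have hdeg : j * P.natDegree = finrank F E := by rw [← hQ.2, natDegree_pow]
  rw [polyVonMangoldt_irreducible_pow hPi hj,
    ← card_filter_minpoly_eq hP hPi (E := E) (Dvd.intro_left j hdeg)]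
  congr 1
  ext x
  rw [Finset.mem_filter_univ, Finset.mem_filter_univ]
  constructor
  · intro h
    exact (monic_irreducible_pow_inj (minpoly.monic (.of_finite F x)) (hirr x) hP hPi
      finrank_pos.ne' h).1
  · rintro rfl
    rw [Nat.eq_of_mul_eq_mul_right hPi.natDegree_pos
      (hdeg.trans (finrank_adjoin_mul_natDegree_minpoly x).symm)]

theorem neg_gaussSum_normLift_traceLift [Fintype F] [IsDomain R] (χ : MulChar F R)
    {ψ : AddChar F R} (hψ : ψ ≠ 1) :
    -gaussSum (normLift E χ) (traceLift E ψ) = (-gaussSum χ ψ) ^ finrank F E := by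
  have hmem (x : E) : minpoly F x ^ finrank F⟮x⟯ E ∈ monicOfDegree F (finrank F E) :=
    mem_monicOfDegree.2 ⟨(minpoly.monic (.of_finite F x)).pow _,
      by rw [natDegree_pow, finrank_adjoin_mul_natDegree_minpoly]⟩
  have hsum : gaussSum (normLift E χ) (traceLift E ψ) =
      vonMangoldtSum (gaussWeight χ ψ) (finrank F E) := by
    simp only [gaussSum, normLift_apply, traceLift_apply, ← gaussWeight_minpoly_pow_finrank]
    rw [← Finset.sum_fiberwise_of_maps_to' fun x _ ↦ hmem x]
    refine Finset.sum_congr rfl fun Q hQ ↦ ?_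
    rw [Finset.sum_const, card_filter_minpoly_pow_finrank_eq hQ, nsmul_eq_mul]
  obtain ⟨n, hn⟩ := Nat.exists_eq_add_of_le' (finrank_pos : 0 < finrank F E)
  rw [hsum, ← monicSum_gaussWeight_one, hn]
  exact (isMonicMultiplicative_gaussWeight χ ψ).neg_vonMangoldtSum_eq_pow
    (fun _ ↦ monicSum_gaussWeight_eq_zero χ hψ) n

end HasseDavenport

section TraceZeroNormSum

open Module

variable {F E R : Type*} [Field F] [Field E] [Algebra F E] [CommRing R]

theorem normLift_ne_one [Finite E] {χ : MulChar F R} (hχ : χ ≠ 1) : normLift E χ ≠ 1 := by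
  obtain ⟨u, hu⟩ := MulChar.ne_one_iff.1 hχ
  obtain ⟨v, rfl⟩ := FiniteField.unitsMap_norm_surjective F E u
  exact MulChar.ne_one_iff.2 ⟨v, hu⟩

theorem normLift_one [FiniteDimensional F E] : normLift E (1 : MulChar F R) = 1 :=
  MulChar.ext fun u ↦ by
    rw [normLift_apply, MulChar.one_apply_coe, MulChar.one_apply (u.isUnit.map _)]

theorem inv_normLift_algebraMap [FiniteDimensional F E] (χ : MulChar F R) (c : F) :
    (normLift E χ)⁻¹ (algebraMap F E c) = (χ ^ finrank F E)⁻¹ c := by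
  rw [MulChar.inv_apply_eq_inv, MulChar.inv_apply_eq_inv, normLift_apply,
    Algebra.norm_algebraMap, map_pow, MulChar.pow_apply' _ finrank_pos.ne']

variable [Fintype E]

theorem sum_normLift_mul_addChar_mul_trace (χ : MulChar F R) (ψ : AddChar F R) (c : F) :
    ∑ x, normLift E χ x * ψ (c * Algebra.trace F E x) =
      (if c = 0 then ∑ x, normLift E χ x else 0) +
        (χ ^ finrank F E)⁻¹ c * gaussSum (normLift E χ) (traceLift E ψ) := by
  rcases eq_or_ne c 0 with rfl | hc
  · simp [MulChar.map_zero]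
  have hshift := gaussSum_mulShift_eq (normLift E χ) (traceLift E ψ)
    (Units.map (algebraMap F E).toMonoidHom (.mk0 c hc))
  rw [Units.coe_map, Units.val_mk0, RingHom.toMonoidHom_eq_coe, MonoidHom.coe_coe,
    inv_normLift_algebraMap] at hshift
  rw [if_neg hc, zero_add, ← hshift, gaussSum]
  simp only [AddChar.mulShift_apply, traceLift_apply, ← Algebra.smul_def, map_smul, smul_eq_mul]

variable [Fintype F] [IsDomain R]

theorem sum_mulChar_eq_ite (χ : MulChar F R) :
    ∑ c, χ c = if χ = 1 then (Fintype.card F : R) - 1 else 0 := by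
  split_ifs with h
  · rw [h, MulChar.sum_one_eq_card_units, Fintype.card_units,
      Nat.cast_sub Fintype.one_lt_card.le, Nat.cast_one]
  · exact MulChar.sum_eq_zero_of_ne_one h

variable (E) in
/-- The sum of `χ(N x)` over the elements `x` of `E` whose trace over `F` is zero. -/
def traceZeroNormSum (χ : MulChar F R) : R :=
  ∑ x : E with Algebra.trace F E x = 0, χ (Algebra.norm F x)

theorem card_mul_traceZeroNormSum (χ : MulChar F R) {ψ : AddChar F R} (hψ : ψ ≠ 1) :
    Fintype.card F * traceZeroNormSum E χ = ∑ x, normLift E χ x -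
      if χ ^ finrank F E = 1 then (Fintype.card F - 1) * (-gaussSum χ ψ) ^ finrank F E else 0 := by
  have horth (x : E) : ∑ c, normLift E χ x * ψ (c * Algebra.trace F E x) =
      if Algebra.trace F E x = 0 then Fintype.card F * χ (Algebra.norm F x) else 0 := by
    rw [← Finset.mul_sum, AddChar.sum_mulShift _ (.of_ne_one hψ), normLift_apply]
    split_ifs <;> push_cast <;> ring
  calc
    _ = ∑ x : E, ∑ c, normLift E χ x * ψ (c * Algebra.trace F E x) := by
      simp only [horth, traceZeroNormSum, Finset.mul_sum, Finset.sum_filter, mul_ite, mul_zero]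
    _ = _ := by
      rw [Finset.sum_comm]
      simp only [sum_normLift_mul_addChar_mul_trace, Finset.sum_add_distrib, Finset.sum_ite_eq',
        Finset.mem_univ, if_true, ← Finset.sum_mul, sum_mulChar_eq_ite, inv_eq_one]
      rw [sub_eq_add_neg, ← neg_gaussSum_normLift_traceLift χ hψ]
      split_ifs <;> ring

theorem exists_addChar_ne_one (F : Type*) [Field F] [Finite F] : ∃ ψ : AddChar F ℂ, ψ ≠ 1 :=
  let ⟨ψ, hψ⟩ := AddChar.exists_apply_ne_zero.2 (one_ne_zero (α := F))
  ⟨ψ, AddChar.ne_one_iff.2 ⟨1, hψ⟩⟩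

theorem traceZeroNormSum_one :
    traceZeroNormSum E (1 : MulChar F ℂ) = (Fintype.card F : ℂ) ^ (finrank F E - 1) - 1 := by
  obtain ⟨ψ, hψ⟩ := exists_addChar_ne_one F
  have hq : (Fintype.card F : ℂ) ≠ 0 := Nat.cast_ne_zero.2 Fintype.card_ne_zero
  have h := card_mul_traceZeroNormSum (E := E) 1 hψ
  rw [normLift_one, sum_mulChar_eq_ite, if_pos rfl, one_pow, if_pos rfl, gaussSum_one_left hψ,
    neg_neg, one_pow, Module.card_eq_pow_finrank (K := F) (V := E), Nat.cast_pow] at h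
  refine mul_left_cancel₀ hq (h.trans ?_)
  rw [mul_sub, mul_pow_sub_one finrank_pos.ne']
  ring

theorem traceZeroNormSum_eq_zero {F : Type*} [Field F] [Finite F] [Algebra F E]
    {χ : MulChar F ℂ} (hχ : χ ^ finrank F E ≠ 1) : traceZeroNormSum E χ = 0 := by
  have := Fintype.ofFinite F
  obtain ⟨ψ, hψ⟩ := exists_addChar_ne_one F
  have hχ1 : χ ≠ 1 := by rintro rfl; exact hχ (one_pow _)
  have h := card_mul_traceZeroNormSum (E := E) χ hψ
  rw [if_neg hχ, sub_zero, MulChar.sum_eq_zero_of_ne_one (normLift_ne_one hχ1)] at h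
  exact (mul_eq_zero.1 h).resolve_left (Nat.cast_ne_zero.2 Fintype.card_ne_zero)

theorem card_mul_traceZeroNormSum_of_pow_eq_one {χ : MulChar F ℂ} (hχ1 : χ ≠ 1)
    (hχ : χ ^ finrank F E = 1) {ψ : AddChar F ℂ} (hψ : ψ ≠ 1) :
    Fintype.card F * traceZeroNormSum E χ =
      -((Fintype.card F - 1) * (-gaussSum χ ψ) ^ finrank F E) := by
  rw [card_mul_traceZeroNormSum χ hψ, if_pos hχ,
    MulChar.sum_eq_zero_of_ne_one (normLift_ne_one hχ1), zero_sub]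

theorem traceZeroNormSum_of_sq_eq_one {χ : MulChar F ℂ} (hχ1 : χ ≠ 1) (hχ2 : χ ^ 2 = 1)
    (hχneg : χ (-1) = 1) {k : ℕ} (hk : finrank F E = 2 * k + 2) :
    traceZeroNormSum E χ = -((Fintype.card F : ℂ) ^ k * (Fintype.card F - 1)) := by
  obtain ⟨ψ, hψ⟩ := exists_addChar_ne_one F
  have hgauss : gaussSum χ ψ ^ 2 = Fintype.card F := by
    rw [gaussSum_sq hχ1 (MulChar.isQuadratic_iff_sq_eq_one.2 hχ2) (.of_ne_one hψ), hχneg, one_mul]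
  have hn : finrank F E = 2 * (k + 1) := by omega
  have h := card_mul_traceZeroNormSum_of_pow_eq_one hχ1
    (by rw [hn, pow_mul, hχ2, one_pow]) hψ (E := E)
  rw [hn, pow_mul, neg_sq, hgauss] at h
  refine mul_left_cancel₀ (Nat.cast_ne_zero.2 Fintype.card_ne_zero) (h.trans ?_)
  ring

theorem gaussSum_pow_four {χ : MulChar F ℂ} (hχ2 : χ ^ 2 ≠ 1) (hχ4 : χ ^ 4 = 1)
    {ψ : AddChar F ℂ} (hψ : ψ ≠ 1) :
    gaussSum χ ψ ^ 4 = Fintype.card F * jacobiSum χ χ ^ 2 := by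
  have hquad : (χ ^ 2).IsQuadratic := MulChar.isQuadratic_iff_sq_eq_one.2 (by rw [← pow_mul, hχ4])
  have hneg : (χ ^ 2) (-1) = 1 := by
    rw [MulChar.pow_apply' _ two_ne_zero, ← map_pow, neg_one_sq, map_one]
  have hjacobi := jacobiSum_mul_nontrivial (χ := χ) (φ := χ) (by rwa [← sq]) ψ
  rw [← sq] at hjacobi
  rw [show gaussSum χ ψ ^ 4 = (gaussSum χ ψ * gaussSum χ ψ) ^ 2 by ring, ← hjacobi, mul_pow,
    gaussSum_sq hχ2 hquad (.of_ne_one hψ), hneg, one_mul]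

theorem traceZeroNormSum_of_pow_four_eq_one {χ : MulChar F ℂ} (hχ2 : χ ^ 2 ≠ 1)
    (hχ4 : χ ^ 4 = 1) {k : ℕ} (hk : finrank F E = 4 * k + 4) :
    traceZeroNormSum E χ =
      -((Fintype.card F : ℂ) ^ k * (jacobiSum χ χ ^ 2) ^ (k + 1) * (Fintype.card F - 1)) := by
  obtain ⟨ψ, hψ⟩ := exists_addChar_ne_one F
  have hχ1 : χ ≠ 1 := by rintro rfl; exact hχ2 (one_pow 2)
  have hn : finrank F E = 4 * (k + 1) := by omega
  have h := card_mul_traceZeroNormSum_of_pow_eq_one hχ1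
    (by rw [hn, pow_mul, hχ4, one_pow]) hψ (E := E)
  rw [hn, pow_mul, Even.neg_pow (by decide), gaussSum_pow_four hχ2 hχ4 hψ] at h
  refine mul_left_cancel₀ (Nat.cast_ne_zero.2 Fintype.card_ne_zero) (h.trans ?_)
  ring

end TraceZeroNormSum

section Counting

open Module

theorem exists_pow_eq_pow_add_mul_iff {G : Type*} [Group G] [Finite G] {g : G} {s : ℕ}
    (hs : s ∣ orderOf g) (n h : ℕ) : (∃ k : ℕ, g ^ n = g ^ (h + s * k)) ↔ n ≡ h [MOD s] := by
  obtain ⟨e, he⟩ := hs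
  constructor
  · rintro ⟨k, hk⟩
    exact Nat.modEq_add_modulus_mul_iff.1
      ((pow_eq_pow_iff_modEq.1 hk).of_dvd (he ▸ Nat.dvd_mul_right s e))
  · intro hmod
    have hle : h ≤ n + orderOf g * h :=
      (Nat.le_mul_of_pos_left h (orderOf_pos g)).trans (Nat.le_add_left _ n)
    have hmod' : h ≡ n + orderOf g * h [MOD s] := by
      rw [he, mul_assoc, Nat.modEq_add_modulus_mul_iff]
      exact hmod.symm
    obtain ⟨k, hk⟩ := (Nat.modEq_iff_exists_eq_add hle).1 hmod'
    exact ⟨k, by rw [← hk, pow_add, pow_mul, pow_orderOf_eq_one, one_pow, mul_one]⟩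

variable {F : Type*} [Field F] {g : Fˣ}

theorem exists_eq_pow_coe [Finite F] (hg : ∀ u : Fˣ, u ∈ Subgroup.zpowers g) {z : F} (hz : z ≠ 0) :
    ∃ n : ℕ, z = (g : F) ^ n := by
  obtain ⟨n, hn⟩ := mem_powers_iff_mem_zpowers.2 (hg (.mk0 z hz))
  exact ⟨n, by rw [← Units.val_pow_eq_pow_val, ← Units.val_mk0 hz, ← hn]⟩

theorem orderOf_apply_generator (hg : ∀ u : Fˣ, u ∈ Subgroup.zpowers g) (χ : MulChar F ℂ) :
    orderOf (χ g) = orderOf χ :=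
  orderOf_eq_orderOf_iff.2 fun n ↦ by
    rw [MulChar.eq_iff hg, MulChar.pow_apply_coe, MulChar.one_apply_coe]

theorem exists_coe_pow_eq_coe_pow_add_mul_iff [Fintype F]
    (hg : ∀ u : Fˣ, u ∈ Subgroup.zpowers g) {s : ℕ} (hs : s ∣ Fintype.card F - 1)
    (n h : ℕ) : (∃ k : ℕ, (g : F) ^ n = (g : F) ^ (h + s * k)) ↔ n ≡ h [MOD s] := by
  rw [← Fintype.card_units, ← Nat.card_eq_fintype_card,
    ← orderOf_eq_card_of_forall_mem_zpowers hg] at hs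
  simp only [← exists_pow_eq_pow_add_mul_iff hs, ← Units.val_pow_eq_pow_val, Units.val_inj]

theorem exists_eq_pow_add_mul_iff [Finite F] (hg : ∀ u : Fˣ, u ∈ Subgroup.zpowers g)
    (χ : MulChar F ℂ) (h : ℕ) (z : F) : (∃ k : ℕ, z = g ^ (h + orderOf χ * k)) ↔ χ z = χ g ^ h := by
  have := Fintype.ofFinite F
  have hχg : χ g ≠ 0 := (g.isUnit.map χ).ne_zero
  rcases eq_or_ne z 0 with rfl | hz
  · simp [MulChar.map_zero, (pow_ne_zero h hχg).symm, (pow_ne_zero _ g.ne_zero).symm]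
  obtain ⟨n, rfl⟩ := exists_eq_pow_coe hg hz
  rw [exists_coe_pow_eq_coe_pow_add_mul_iff hg (χ.orderOf_dvd_card_sub_one F), map_pow,
    ← orderOf_apply_generator hg, ← Units.val_mk0 hχg, orderOf_units, ← pow_eq_pow_iff_modEq,
    ← Units.val_inj, Units.val_pow_eq_pow_val, Units.val_pow_eq_pow_val]

theorem sum_range_orderOf_pow_apply [Finite F] (hg : ∀ u : Fˣ, u ∈ Subgroup.zpowers g)
    (χ : MulChar F ℂ) (h : ℕ) (z : F) :
    ∑ j ∈ Finset.range (orderOf χ), (χ g ^ h)⁻¹ ^ j * (χ ^ j) z =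
      if ∃ k : ℕ, z = g ^ (h + orderOf χ * k) then (orderOf χ : ℂ) else 0 := by
  have hχg : χ g ^ h ≠ 0 := ((g.isUnit.map χ).pow h).ne_zero
  have hiff := exists_eq_pow_add_mul_iff hg χ h z
  rcases eq_or_ne z 0 with rfl | hz
  · rw [if_neg (by rw [hiff, χ.map_zero]; exact hχg.symm)]
    exact Finset.sum_eq_zero fun j _ ↦ by rw [MulChar.map_zero, mul_zero]
  have hterm (j : ℕ) : (χ g ^ h)⁻¹ ^ j * (χ ^ j) z = ((χ g ^ h)⁻¹ * χ z) ^ j := by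
    rw [mul_pow, ← Units.val_mk0 hz, MulChar.pow_apply_coe]
  have hpow : ((χ g ^ h)⁻¹ * χ z) ^ orderOf χ = 1 := by
    rw [← hterm, ← orderOf_apply_generator hg, ← inv_pow, ← pow_mul, mul_comm h, pow_mul,
      inv_pow, pow_orderOf_eq_one, orderOf_apply_generator hg, pow_orderOf_eq_one,
      MulChar.one_apply hz.isUnit, inv_one, one_pow, one_mul]
  simp only [hterm]
  split_ifs with hz'
  · simp [hiff.1 hz', hχg]
  · rw [geom_sum_eq, hpow, sub_self, zero_div]
    rwa [Ne, inv_mul_eq_one₀ hχg, eq_comm, ← hiff]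

theorem orderOf_mul_NN_finrank [Fintype F] {E : Type*} [Field E] [Fintype E] [Algebra F E]
    (hg : ∀ u : Fˣ, u ∈ Subgroup.zpowers g) (χ : MulChar F ℂ) (h : ℕ) :
    orderOf χ * (NN F E g (orderOf χ) h (finrank F E) 0 : ℂ) =
      ∑ j ∈ Finset.range (orderOf χ), (χ g ^ h)⁻¹ ^ j * traceZeroNormSum E (χ ^ j) := by
  have hcard : NN F E g (orderOf χ) h (finrank F E) 0 =
      ({x : E | Algebra.trace F E x = 0 ∧ ∃ k : ℕ, Algebra.norm F x =
        (g : F) ^ (h + orderOf χ * k)} : Finset E).card := by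
    simp only [NN, ← Module.card_eq_pow_finrank, FiniteField.pow_card, true_and,
      Nat.card_eq_fintype_card, Fintype.card_subtype]
  rw [hcard, ← Finset.filter_filter, Finset.card_filter, Nat.cast_sum, Finset.mul_sum]
  simp only [traceZeroNormSum, Finset.mul_sum]
  rw [Finset.sum_comm]
  refine Finset.sum_congr rfl fun x _ ↦ ?_
  rw [sum_range_orderOf_pow_apply hg]
  split_ifs <;> simp

end Counting

section Descent

open Module

theorem modEq_mul_iff_modEq_div_gcd {M s h i n : ℕ} (hs : 0 < s) (hdvd : M.gcd s ∣ h)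
    (hi : M / M.gcd s * i ≡ h / M.gcd s [MOD s / M.gcd s]) :
    n * M ≡ h [MOD s] ↔ n ≡ i [MOD s / M.gcd s] := by
  set d := M.gcd s
  have hd : 0 < d := Nat.gcd_pos_of_pos_right M hs
  have hcop : (s / d).gcd (M / d) = 1 := (Nat.coprime_div_gcd_div_gcd hd).symm
  calc
    n * M ≡ h [MOD s] ↔ d * (M / d * n) ≡ d * (h / d) [MOD d * (s / d)] := by
      rw [← mul_assoc, Nat.mul_div_cancel' (Nat.gcd_dvd_left M s), Nat.mul_div_cancel' hdvd,
        Nat.mul_div_cancel' (Nat.gcd_dvd_right M s), mul_comm]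
    _ ↔ M / d * n ≡ h / d [MOD s / d] := Nat.ModEq.mul_left_cancel_iff' hd.ne'
    _ ↔ n ≡ i [MOD s / d] :=
      ⟨fun hn ↦ (hn.trans hi.symm).cancel_left_of_coprime hcop, fun hn ↦ (hn.mul_left _).trans hi⟩

variable {F K : Type*} [Field F] [Field K] [Algebra F K]

theorem trace_coe_eq_mul [FiniteDimensional F K] (E : IntermediateField F K) (x : E) :
    Algebra.trace F K x = finrank E K * Algebra.trace F E x := by
  rw [← Algebra.trace_trace (S := E), ← IntermediateField.algebraMap_apply,
    Algebra.trace_algebraMap, map_nsmul, nsmul_eq_mul]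

theorem norm_coe_eq_pow (E : IntermediateField F K) (x : E) :
    Algebra.norm F (x : K) = Algebra.norm F x ^ finrank E K := by
  rw [← Algebra.norm_norm (S := E), ← IntermediateField.algebraMap_apply,
    Algebra.norm_algebraMap, map_pow]

variable [Fintype F]

theorem exists_pow_eq_pow_add_mul_iff_div_gcd {g : Fˣ} (hg : ∀ u : Fˣ, u ∈ Subgroup.zpowers g)
    {M s h i : ℕ} (hM : M ≠ 0) (hs : s ∣ Fintype.card F - 1) (hdvd : M.gcd s ∣ h)
    (hi : M / M.gcd s * i ≡ h / M.gcd s [MOD s / M.gcd s]) (y : F) :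
    (∃ k : ℕ, y ^ M = (g : F) ^ (h + s * k)) ↔
      ∃ k : ℕ, y = (g : F) ^ (i + s / M.gcd s * k) := by
  rcases eq_or_ne y 0 with rfl | hy
  · simp [zero_pow hM, (pow_ne_zero _ g.ne_zero).symm]
  obtain ⟨n, rfl⟩ := exists_eq_pow_coe hg hy
  have hs0 : 0 < s := Nat.pos_of_dvd_of_pos hs (Nat.sub_pos_of_lt Fintype.one_lt_card)
  rw [← pow_mul, exists_coe_pow_eq_coe_pow_add_mul_iff hg hs,
    exists_coe_pow_eq_coe_pow_add_mul_iff hg ((Nat.div_dvd_of_dvd (M.gcd_dvd_right s)).trans hs),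
    modEq_mul_iff_modEq_div_gcd hs0 hdvd hi]

variable (F K) in
theorem exists_intermediateField_finrank_eq [Finite K] {t : ℕ} (ht : t ∣ finrank F K) :
    ∃ E : IntermediateField F K, finrank F E = t ∧ ∀ x, x ∈ E ↔ x ^ Fintype.card F ^ t = x := by
  let φ := FiniteField.frobeniusAlgEquivOfAlgebraic F K
  let E := IntermediateField.fixedField (Subgroup.zpowers (φ ^ t))
  have ht0 : 0 < t := Nat.pos_of_dvd_of_pos ht finrank_pos
  have hcard : finrank E K = finrank F K / t := by
    rw [IntermediateField.finrank_fixedField_eq_card, Nat.card_zpowers, orderOf_pow,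
      FiniteField.orderOf_frobeniusAlgEquivOfAlgebraic, Nat.gcd_eq_right ht]
  refine ⟨E, ?_, fun x ↦ ?_⟩
  · refine Nat.eq_of_mul_eq_mul_right (Nat.div_pos (Nat.le_of_dvd finrank_pos ht) ht0) ?_
    rw [← hcard, finrank_mul_finrank, hcard, Nat.mul_div_cancel' ht]
  · have hφ : (φ ^ t) x = x ^ Fintype.card F ^ t := by
      rw [AlgEquiv.coe_pow, FiniteField.coe_frobeniusAlgEquivOfAlgebraic_iterate]
    rw [IntermediateField.mem_fixedField_iff, ← hφ, ← AlgEquiv.smul_def,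
      ← MulAction.mem_stabilizer_iff, ← Subgroup.zpowers_le]
    rfl

theorem NN_eq_NN_intermediateField [Fintype K] {g : Fˣ} (hg : ∀ u : Fˣ, u ∈ Subgroup.zpowers g)
    {E : IntermediateField F K} {t : ℕ} (hE : ∀ x, x ∈ E ↔ x ^ Fintype.card F ^ t = x)
    {M s h i : ℕ} (hM : finrank E K = M) (hMF : (M : F) ≠ 0) (hs : s ∣ Fintype.card F - 1)
    (hdvd : M.gcd s ∣ h) (hi : M / M.gcd s * i ≡ h / M.gcd s [MOD s / M.gcd s]) :
    NN F K g s h t 0 = NN F E g (s / M.gcd s) i t 0 := by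
  have hM0 : M ≠ 0 := by rintro rfl; exact hMF Nat.cast_zero
  have hxE (x : E) : x ^ Fintype.card F ^ t = x := Subtype.ext ((hE x).1 x.2)
  simp only [NN, ← hE]
  rw [← Nat.card_congr (Equiv.subtypeSubtypeEquivSubtypeInter (· ∈ E) _)]
  refine Nat.card_congr (Equiv.subtypeEquivRight fun x ↦ ?_)
  rw [trace_coe_eq_mul, norm_coe_eq_pow, hM,
    exists_pow_eq_pow_add_mul_iff_div_gcd hg hM0 hs hdvd hi, mul_eq_zero, or_iff_right hMF,
    and_iff_right (hxE x)]

end Descent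

section Quartic

open Module

variable {F : Type*} [Field F] {g : Fˣ} {χ : MulChar F ℂ}

theorem orderOf_eq_four_of_apply_eq_I (hg : ∀ u : Fˣ, u ∈ Subgroup.zpowers g) (hχ : χ g = I) :
    orderOf χ = 4 := by
  rw [← orderOf_apply_generator hg, hχ]
  refine orderOf_eq_prime_pow (p := 2) (n := 1) ?_ ?_ <;> norm_num [I_sq, I_pow_four]

theorem orderOf_sq_of_orderOf_eq_four (hχ : orderOf χ = 4) : orderOf (χ ^ 2) = 2 := by
  rw [orderOf_pow_of_dvd two_ne_zero (hχ ▸ by decide), hχ]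

variable [Fintype F]

theorem jacobiSum_inv_eq_conj (χ φ : MulChar F ℂ) :
    jacobiSum χ⁻¹ φ⁻¹ = starRingEnd ℂ (jacobiSum χ φ) := by
  simp only [jacobiSum, map_sum, map_mul, ← MulChar.star_apply', RCLike.star_def]

variable {E : Type*} [Field E] [Fintype E] [Algebra F E]

theorem traceZeroNormSum_sq_of_orderOf_eq_four (hχ : orderOf χ = 4) (hn : 2 ∣ finrank F E) :
    traceZeroNormSum E (χ ^ 2) =
      -((Fintype.card F : ℂ) ^ ((finrank F E - 2) / 2) * (Fintype.card F - 1)) := by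
  have hpos : 0 < finrank F E := finrank_pos
  refine traceZeroNormSum_of_sq_eq_one ?_ ?_ ?_ (by omega)
  · rw [Ne, ← orderOf_dvd_iff_pow_eq_one, hχ]; decide
  · rw [← pow_mul, ← orderOf_dvd_iff_pow_eq_one, hχ]
  · rw [MulChar.pow_apply' _ two_ne_zero, ← map_pow, neg_one_sq, map_one]

theorem traceZeroNormSum_of_orderOf_eq_four (hχ : orderOf χ = 4) (hn : 4 ∣ finrank F E) {π : ℂ}
    (hπ : jacobiSum χ χ ^ 2 = π ^ 2) :
    traceZeroNormSum E χ = -((Fintype.card F : ℂ) ^ ((finrank F E - 4) / 4) *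
      π ^ (finrank F E / 2) * (Fintype.card F - 1)) := by
  have hpos : 0 < finrank F E := finrank_pos
  have hhalf : finrank F E / 2 = 2 * ((finrank F E - 4) / 4 + 1) := by omega
  rw [hhalf, pow_mul, ← hπ]
  refine traceZeroNormSum_of_pow_four_eq_one ?_ ?_ (by omega)
  · rw [Ne, ← orderOf_dvd_iff_pow_eq_one, hχ]; decide
  · rw [← orderOf_dvd_iff_pow_eq_one, hχ]

theorem NN_one_finrank (hg : ∀ u : Fˣ, u ∈ Subgroup.zpowers g) (i : ℕ) :
    (NN F E g 1 i (finrank F E) 0 : ℂ) = (Fintype.card F : ℂ) ^ (finrank F E - 1) - 1 := by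
  simpa [traceZeroNormSum_one] using orderOf_mul_NN_finrank (E := E) hg 1 i

theorem two_mul_NN_two_finrank (hg : ∀ u : Fˣ, u ∈ Subgroup.zpowers g) (hχ : χ g = I) (i : ℕ) :
    2 * (NN F E g 2 i (finrank F E) 0 : ℂ) =
      (Fintype.card F : ℂ) ^ (finrank F E - 1) - 1 + (-1) ^ i * traceZeroNormSum E (χ ^ 2) := by
  have hord := orderOf_sq_of_orderOf_eq_four (orderOf_eq_four_of_apply_eq_I hg hχ)
  have h := orderOf_mul_NN_finrank (E := E) hg (χ ^ 2) i
  rw [hord, MulChar.pow_apply_coe, hχ, I_sq, ← inv_pow, inv_neg_one, Finset.sum_range_succ,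
    Finset.sum_range_one] at h
  simpa [traceZeroNormSum_one] using h

theorem four_mul_NN_four_finrank (hg : ∀ u : Fˣ, u ∈ Subgroup.zpowers g) (hχ : χ g = I) (i : ℕ) :
    4 * (NN F E g 4 i (finrank F E) 0 : ℂ) =
      (Fintype.card F : ℂ) ^ (finrank F E - 1) - 1 + (-1) ^ i * traceZeroNormSum E (χ ^ 2) +
        I ^ i * ((-1) ^ i * traceZeroNormSum E χ + traceZeroNormSum E χ⁻¹) := by
  have hord := orderOf_eq_four_of_apply_eq_I hg hχ
  have h := orderOf_mul_NN_finrank (E := E) hg χ i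
  have hinv : χ ^ 3 = χ⁻¹ := by
    rw [eq_inv_iff_mul_eq_one, ← pow_succ, ← orderOf_dvd_iff_pow_eq_one, hord]
  have hI1 : (I ^ i)⁻¹ = (-1) ^ i * I ^ i := by rw [← inv_pow, inv_I, neg_eq_neg_one_mul, mul_pow]
  have hI2 : (I ^ i) ^ 2 = (-1) ^ i := by rw [← pow_mul, mul_comm, pow_mul, I_sq]
  have hI3 : ((-1) ^ i : ℂ) ^ 2 = 1 := by rw [← pow_mul, mul_comm, pow_mul, neg_one_sq, one_pow]
  simp only [hord, hχ, hI1, Finset.sum_range_succ, Finset.sum_range_zero, hinv, pow_zero, pow_one,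
    traceZeroNormSum_one, Nat.cast_ofNat] at h
  rw [h]
  set w : ℂ := I ^ i
  set u : ℂ := (-1) ^ i
  linear_combination (u ^ 2 * traceZeroNormSum E (χ ^ 2) + u ^ 3 * w * traceZeroNormSum E χ⁻¹) *
    hI2 + (u * traceZeroNormSum E (χ ^ 2) + (u ^ 2 + 1) * w * traceZeroNormSum E χ⁻¹) * hI3

theorem NN_two_finrank_of_not_two_dvd (hg : ∀ u : Fˣ, u ∈ Subgroup.zpowers g) (hχ : χ g = I)
    (i : ℕ) (hn : ¬ 2 ∣ finrank F E) :
    (NN F E g 2 i (finrank F E) 0 : ℂ) =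
      ((Fintype.card F : ℂ) ^ (finrank F E - 1) - 1) / 2 := by
  have hord := orderOf_sq_of_orderOf_eq_four (orderOf_eq_four_of_apply_eq_I hg hχ)
  have h := two_mul_NN_two_finrank (E := E) hg hχ i
  rw [traceZeroNormSum_eq_zero (by rwa [Ne, ← orderOf_dvd_iff_pow_eq_one, hord])] at h
  linear_combination h / 2

theorem NN_two_finrank_of_two_dvd (hg : ∀ u : Fˣ, u ∈ Subgroup.zpowers g) (hχ : χ g = I)
    (i : ℕ) (hn : 2 ∣ finrank F E) :
    (NN F E g 2 i (finrank F E) 0 : ℂ) =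
      (1 / 2) * ((Fintype.card F : ℂ) ^ (finrank F E - 1) - 1 -
        (-1) ^ i * (Fintype.card F : ℂ) ^ ((finrank F E - 2) / 2) * (Fintype.card F - 1)) := by
  have h := two_mul_NN_two_finrank (E := E) hg hχ i
  rw [traceZeroNormSum_sq_of_orderOf_eq_four (orderOf_eq_four_of_apply_eq_I hg hχ) hn] at h
  linear_combination h / 2

theorem four_mul_NN_four_finrank_of_not_four_dvd (hg : ∀ u : Fˣ, u ∈ Subgroup.zpowers g)
    (hχ : χ g = I) (i : ℕ) (hn : ¬ 4 ∣ finrank F E) :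
    4 * (NN F E g 4 i (finrank F E) 0 : ℂ) =
      (Fintype.card F : ℂ) ^ (finrank F E - 1) - 1 + (-1) ^ i * traceZeroNormSum E (χ ^ 2) := by
  have hord := orderOf_eq_four_of_apply_eq_I hg hχ
  have hχn : χ ^ finrank F E ≠ 1 := by rwa [Ne, ← orderOf_dvd_iff_pow_eq_one, hord]
  have hinv : χ⁻¹ ^ finrank F E ≠ 1 := by rwa [inv_pow, inv_ne_one]
  rw [four_mul_NN_four_finrank hg hχ, traceZeroNormSum_eq_zero hχn, traceZeroNormSum_eq_zero hinv,
    mul_zero, add_zero, mul_zero, add_zero]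

theorem NN_four_finrank_of_not_two_dvd (hg : ∀ u : Fˣ, u ∈ Subgroup.zpowers g) (hχ : χ g = I)
    (i : ℕ) (hn : ¬ 2 ∣ finrank F E) :
    (NN F E g 4 i (finrank F E) 0 : ℂ) =
      ((Fintype.card F : ℂ) ^ (finrank F E - 1) - 1) / 4 := by
  have hord := orderOf_sq_of_orderOf_eq_four (orderOf_eq_four_of_apply_eq_I hg hχ)
  have h := four_mul_NN_four_finrank_of_not_four_dvd (E := E) hg hχ i (by omega)
  rw [traceZeroNormSum_eq_zero (by rwa [Ne, ← orderOf_dvd_iff_pow_eq_one, hord])] at h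
  linear_combination h / 4

theorem NN_four_finrank_of_two_dvd_of_not_four_dvd (hg : ∀ u : Fˣ, u ∈ Subgroup.zpowers g)
    (hχ : χ g = I) (i : ℕ) (hn2 : 2 ∣ finrank F E) (hn4 : ¬ 4 ∣ finrank F E) :
    (NN F E g 4 i (finrank F E) 0 : ℂ) =
      (1 / 4) * ((Fintype.card F : ℂ) ^ (finrank F E - 1) - 1 -
        (-1) ^ i * (Fintype.card F : ℂ) ^ ((finrank F E - 2) / 2) * (Fintype.card F - 1)) := by
  have h := four_mul_NN_four_finrank_of_not_four_dvd (E := E) hg hχ i hn4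
  rw [traceZeroNormSum_sq_of_orderOf_eq_four (orderOf_eq_four_of_apply_eq_I hg hχ) hn2] at h
  linear_combination h / 4

theorem neg_one_pow_mul_two_mul_re_mul_I_pow (z : ℂ) (i : ℕ) :
    (-1) ^ i * (2 * ((z * I ^ i).re : ℂ)) = I ^ i * ((-1) ^ i * z + starRingEnd ℂ z) := by
  have hconj : starRingEnd ℂ (I ^ i) = (-1) ^ i * I ^ i := by
    rw [map_pow, conj_I, neg_eq_neg_one_mul, mul_pow]
  have hsq : ((-1) ^ i : ℂ) ^ 2 = 1 := by rw [← pow_mul, mul_comm, pow_mul, neg_one_sq, one_pow]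
  rw [← Complex.ofReal_ofNat, ← Complex.ofReal_mul, ← Complex.add_conj, map_mul, hconj]
  linear_combination I ^ i * starRingEnd ℂ z * hsq

theorem NN_four_finrank_of_four_dvd (hg : ∀ u : Fˣ, u ∈ Subgroup.zpowers g) (hχ : χ g = I)
    (i : ℕ) (hn : 4 ∣ finrank F E) {π : ℂ} (hπ : jacobiSum χ χ ^ 2 = π ^ 2) :
    (NN F E g 4 i (finrank F E) 0 : ℂ) =
      (1 / 4) * ((Fintype.card F : ℂ) ^ (finrank F E - 1) - 1 -
        (-1) ^ i * (Fintype.card F : ℂ) ^ ((finrank F E - 4) / 4) * (Fintype.card F - 1) *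
          ((Fintype.card F : ℂ) ^ (finrank F E / 4) +
            2 * ((π ^ (finrank F E / 2) * I ^ i).re : ℂ))) := by
  have hord := orderOf_eq_four_of_apply_eq_I hg hχ
  have hπconj : jacobiSum χ⁻¹ χ⁻¹ ^ 2 = starRingEnd ℂ π ^ 2 := by
    rw [jacobiSum_inv_eq_conj, ← map_pow, hπ, map_pow]
  have hpos : 0 < finrank F E := finrank_pos
  have hexp : (finrank F E - 2) / 2 = (finrank F E - 4) / 4 + finrank F E / 4 := by omega
  have h := four_mul_NN_four_finrank (E := E) hg hχ i
  rw [traceZeroNormSum_sq_of_orderOf_eq_four hord ((by decide : 2 ∣ 4).trans hn),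
    traceZeroNormSum_of_orderOf_eq_four hord hn hπ,
    traceZeroNormSum_of_orderOf_eq_four ((orderOf_inv χ).trans hord) hn hπconj, hexp, pow_add,
    ← map_pow] at h
  linear_combination h / 4 + (Fintype.card F : ℂ) ^ ((finrank F E - 4) / 4) *
    (Fintype.card F - 1) / 4 * neg_one_pow_mul_two_mul_re_mul_I_pow (π ^ (finrank F E / 2)) i

end Quartic

section JacobiSum

open GaussianInt

theorem sum_pow_mul_one_sub_pow_eq_zero {F : Type*} [Field F] [Fintype F] {a b : ℕ}
    (hab : a + b < Fintype.card F - 1) : ∑ x : F, x ^ a * (1 - x) ^ b = 0 := by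
  have hexpand (x : F) : x ^ a * (1 - x) ^ b =
      ∑ j ∈ Finset.range (b + 1), (-1) ^ j * b.choose j * x ^ (a + j) := by
    rw [sub_eq_neg_add, add_pow, Finset.mul_sum]
    exact Finset.sum_congr rfl fun j _ ↦ by rw [neg_pow, one_pow, pow_add]; ring
  simp only [hexpand]
  rw [Finset.sum_comm]
  refine Finset.sum_eq_zero fun j hj ↦ ?_
  have hj' : j ≤ b := Finset.mem_range_succ_iff.1 hj
  rw [← Finset.mul_sum, FiniteField.sum_pow_lt_card_sub_one F _ (by omega), mul_zero]

theorem even_im_jacobiSum_self {R : Type*} [CommRing R] [Fintype R] (χ : MulChar R GaussianInt) :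
    Even (jacobiSum χ χ).im := by
  let imMod2 : GaussianInt →+ ZMod 2 :=
    { toFun := fun z ↦ (z.im : ZMod 2), map_zero' := by simp, map_add' := by simp }
  rw [← ZMod.intCast_eq_zero_iff_even]
  change imMod2 (jacobiSum χ χ) = 0
  rw [jacobiSum, map_sum]
  refine Finset.sum_involution (fun x _ ↦ 1 - x) (fun x _ ↦ ?_) (fun x _ hx hfix ↦ hx ?_)
    (fun _ _ ↦ Finset.mem_univ _) (fun x _ ↦ sub_sub_cancel 1 x)
  · rw [sub_sub_cancel, mul_comm (χ (1 - x)), CharTwo.add_self_eq_zero]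
  · rw [hfix]
    have himsq : (χ x * χ x).im = (χ x).re * (χ x).im + (χ x).re * (χ x).im := by
      rw [Zsqrtd.im_mul, mul_comm (χ x).im]
    exact (ZMod.intCast_eq_zero_iff_even).2 ⟨_, himsq⟩

theorem odd_left_of_sq_add_sq_eq {a b n : ℤ} (hab : a ^ 2 + b ^ 2 = n) (hn : Odd n)
    (hb : Even b) : Odd a := by
  rw [← hab, Int.odd_add] at hn
  exact (Int.odd_pow' two_ne_zero).1 (hn.2 (hb.pow_of_ne_zero two_ne_zero))

/- By the two-square identity `(αb − βa)² + (αa + βb)² = n²`, and parity keeps the second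
square away from zero, so the first one, a multiple of `n²`, has to vanish. -/
theorem eq_or_eq_neg_of_sq_add_sq_eq {a b α β n : ℤ} (hab : a ^ 2 + b ^ 2 = n)
    (hαβ : α ^ 2 + β ^ 2 = n) (hn : Odd n) (hb : Even b) (hβ : Even β)
    (hdvd : n ∣ α * b - β * a) : α = a ∧ β = b ∨ α = -a ∧ β = -b := by
  obtain ⟨c, hc⟩ := hdvd
  have hn0 : n ≠ 0 := by rintro rfl; exact absurd hn (by decide)
  have hbrahmagupta : (α * b - β * a) ^ 2 + (α * a + β * b) ^ 2 = n ^ 2 := by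
    linear_combination (a ^ 2 + b ^ 2) * hαβ + n * hab
  have hne : α * a + β * b ≠ 0 := by
    have hodd : Odd (α * a + β * b) := ((odd_left_of_sq_add_sq_eq hαβ hn hβ).mul
      (odd_left_of_sq_add_sq_eq hab hn hb)).add_even (hβ.mul_right b)
    intro h0
    exact absurd (h0 ▸ hodd) (by decide)
  have hc0 : c = 0 := by
    have hpos : 0 < n ^ 2 * (1 - c ^ 2) := by
      have hsq : n ^ 2 * (1 - c ^ 2) = (α * a + β * b) ^ 2 := by rw [hc] at hbrahmagupta; linarith
      rw [hsq]
      exact sq_pos_of_ne_zero hne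
    have hlt : c ^ 2 < 1 := sub_pos.1 ((mul_pos_iff_of_pos_left (by positivity)).1 hpos)
    exact Int.abs_lt_one_iff.1 (sq_lt_one_iff_abs_lt_one c |>.1 hlt)
  rw [hc0, mul_zero] at hc
  have hα : α * n = a * (α * a + β * b) := by linear_combination b * hc - α * hab
  have hβ' : β * n = b * (α * a + β * b) := by linear_combination -a * hc - β * hab
  have hpm : (α * a + β * b) ^ 2 = n ^ 2 := by rw [← hbrahmagupta, hc]; ring
  rcases sq_eq_sq_iff_eq_or_eq_neg.1 hpm with h | h <;> rw [h] at hα hβ'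
  · exact .inl ⟨mul_right_cancel₀ hn0 hα, mul_right_cancel₀ hn0 hβ'⟩
  · exact .inr ⟨mul_right_cancel₀ hn0 (by rw [hα]; ring), mul_right_cancel₀ hn0 (by rw [hβ']; ring)⟩

variable {F : Type*} [Field F]

theorem normSq_jacobiSum [Fintype F] {χ φ : MulChar F ℂ} (hχ : χ ≠ 1) (hφ : φ ≠ 1)
    (hχφ : χ * φ ≠ 1) : normSq (jacobiSum χ φ) = Fintype.card F := by
  have hchar : ringChar ℂ ≠ ringChar F := by
    rw [ringChar.eq_zero]
    exact (CharP.char_ne_zero_of_finite F (ringChar F)).symm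
  have h := jacobiSum_mul_jacobiSum_inv hchar hχ hφ hχφ
  rw [jacobiSum_inv_eq_conj, mul_conj] at h
  exact_mod_cast h

variable {g : Fˣ}

theorem generator_pow_eq_neg_one [Fintype F] (hg : ∀ u : Fˣ, u ∈ Subgroup.zpowers g) {n : ℕ}
    (hF : Fintype.card F = 2 * n + 1) : (g : F) ^ n = -1 := by
  have hn : 0 < n := by have := Fintype.one_lt_card (α := F); omega
  have hord : orderOf (g : F) = 2 * n := by
    rw [orderOf_units, orderOf_eq_card_of_forall_mem_zpowers hg, Nat.card_eq_fintype_card,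
      Fintype.card_units, hF, Nat.add_sub_cancel]
  refine (sq_eq_one_iff.1 ?_).resolve_left (pow_ne_one_of_lt_orderOf hn.ne' (by omega))
  rw [← pow_mul, mul_comm, ← hord, pow_orderOf_eq_one]

theorem exists_ringHomComp_toComplex_eq [Finite F] (hg : ∀ u : Fˣ, u ∈ Subgroup.zpowers g)
    {χ : MulChar F ℂ} (hχ : χ g = I) :
    ∃ χ' : MulChar F GaussianInt, χ' g = ⟨0, 1⟩ ∧ χ'.ringHomComp toComplex = χ := by
  have := Fintype.ofFinite F
  let ι : GaussianIntˣ := ⟨⟨0, 1⟩, ⟨0, -1⟩, by decide, by decide⟩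
  have hι : ι ∈ rootsOfUnity (Fintype.card Fˣ) GaussianInt := by
    obtain ⟨e, he⟩ := orderOf_eq_four_of_apply_eq_I hg hχ ▸ χ.orderOf_dvd_card_sub_one F
    rw [_root_.mem_rootsOfUnity, Fintype.card_units, he, pow_mul, show ι ^ 4 = 1 by ext <;> decide,
      one_pow]
  refine ⟨.ofRootOfUnity hι hg, MulChar.ofRootOfUnity_spec hι hg, ?_⟩
  rw [MulChar.eq_iff hg, MulChar.ringHomComp_apply, MulChar.ofRootOfUnity_spec, hχ]
  simp [ι, toComplex_def]

/- Reduction `ℤ[i] → F`, `i ↦ g ^ f`, turns `χ x` into `x ^ f`, hence the Jacobi sum into the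
vanishing sum of `x ^ f * (1 - x) ^ f`. -/
theorem im_jacobiSum_self_eq [Fintype F] (hg : ∀ u : Fˣ, u ∈ Subgroup.zpowers g) {f : ℕ}
    (hF : Fintype.card F = 4 * f + 1) {χ : MulChar F GaussianInt} (hχ : χ g = ⟨0, 1⟩) :
    ((jacobiSum χ χ).im : F) = (jacobiSum χ χ).re * (g : F) ^ f := by
  have hf : 0 < f := by have := Fintype.one_lt_card (α := F); omega
  have hsq : (g : F) ^ f * (g : F) ^ f = -1 := by
    rw [← pow_add, ← two_mul, generator_pow_eq_neg_one hg (by omega)]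
  let red : GaussianInt →+* F := Zsqrtd.lift ⟨(g : F) ^ f, by rw [hsq]; simp⟩
  have hred (z : GaussianInt) : red z = z.re + z.im * (g : F) ^ f := rfl
  have hχred (x : F) : red (χ x) = x ^ f := by
    rcases eq_or_ne x 0 with rfl | hx
    · rw [MulChar.map_zero, map_zero, zero_pow hf.ne']
    · obtain ⟨n, rfl⟩ := exists_eq_pow_coe hg hx
      rw [map_pow, map_pow, hχ, hred, Int.cast_zero, Int.cast_one, zero_add, one_mul,
        pow_right_comm]
  have hzero : red (jacobiSum χ χ) = 0 := by
    simp only [jacobiSum, map_sum, map_mul, hχred]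
    exact sum_pow_mul_one_sub_pow_eq_zero (by omega)
  rw [hred] at hzero
  linear_combination -(g : F) ^ f * hzero + ((jacobiSum χ χ).im : F) * hsq

theorem jacobiSum_sq_eq_sq_add_I_mul {p f : ℕ} [Fact p.Prime] (hp : p = 4 * f + 1) {g : (ZMod p)ˣ}
    (hg : ∀ u : (ZMod p)ˣ, u ∈ Subgroup.zpowers g) {χ : MulChar (ZMod p) ℂ} (hχ : χ g = I)
    {a b : ℤ} (hab : a ^ 2 + b ^ 2 = p) (hb : Even b) (hba : (b : ZMod p) = a * g ^ f) :
    jacobiSum χ χ ^ 2 = (a + I * b) ^ 2 := by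
  have hord := orderOf_eq_four_of_apply_eq_I hg hχ
  have hχ1 : χ ≠ 1 := by rintro rfl; exact absurd (orderOf_one.symm.trans hord) (by decide)
  have hχ2 : χ * χ ≠ 1 := by rw [← sq, Ne, ← orderOf_dvd_iff_pow_eq_one, hord]; decide
  obtain ⟨χ', hχ'g, hχ'⟩ := exists_ringHomComp_toComplex_eq hg hχ
  have hJ : jacobiSum χ χ = toComplex (jacobiSum χ' χ') := by rw [← hχ', jacobiSum_ringHomComp]
  set J := jacobiSum χ' χ'
  have hnorm : J.re ^ 2 + J.im ^ 2 = p := by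
    have h := normSq_jacobiSum hχ1 hχ1 hχ2
    rw [hJ, normSq_apply, ← GaussianInt.intCast_re, ← GaussianInt.intCast_im,
      ZMod.card, ← sq, ← sq] at h
    exact_mod_cast h
  have hJba : (J.im : ZMod p) = J.re * (g : ZMod p) ^ f :=
    im_jacobiSum_self_eq hg ((ZMod.card p).trans hp) hχ'g
  have hdvd : (p : ℤ) ∣ J.re * b - J.im * a := by
    rw [← ZMod.intCast_zmod_eq_zero_iff_dvd]
    push_cast
    rw [hba, hJba]
    ring
  have hodd : Odd (p : ℤ) := ⟨2 * f, by rw [hp]; push_cast; ring⟩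
  rw [hJ, toComplex_def]
  rcases eq_or_eq_neg_of_sq_add_sq_eq hab hnorm hodd hb (even_im_jacobiSum_self χ') hdvd with
    ⟨hre, him⟩ | ⟨hre, him⟩ <;> rw [hre, him] <;> push_cast <;> ring

theorem even_of_sq_add_sq_eq_of_modEq {p : ℕ} [Fact p.Prime] (hp : p ≠ 2) {a b : ℤ}
    (hab : a ^ 2 + b ^ 2 = p) (ha : a ≡ -legendreSym p 2 [ZMOD 4]) : Even b := by
  have hp' : Odd (p : ℤ) := by exact_mod_cast (Fact.out : p.Prime).odd_of_ne_two hp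
  have h2 : ((2 : ℤ) : ZMod p) ≠ 0 := by
    exact_mod_cast Ring.two_ne_zero (by rwa [ZMod.ringChar_zmod_n])
  have hodd : Odd a := by
    rw [Int.odd_iff]
    rcases legendreSym.eq_one_or_neg_one p h2 with h | h <;> rw [h] at ha <;>
      unfold Int.ModEq at ha <;> omega
  rw [← hab, Int.odd_add] at hp'
  exact (Int.even_pow' two_ne_zero).1 (hp'.1 hodd.pow)

theorem jacobiSum_sq_eq_sq_of_modEq_neg_legendreSym {p f : ℕ} [Fact p.Prime] (hp : p = 4 * f + 1)
    {g : (ZMod p)ˣ} (hg : ∀ u : (ZMod p)ˣ, u ∈ Subgroup.zpowers g) {χ : MulChar (ZMod p) ℂ}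
    (hχ : χ g = I) {a b : ℤ} (hab : a ^ 2 + b ^ 2 = p) (ha : a ≡ -legendreSym p 2 [ZMOD 4])
    (hba : (b : ZMod p) = a * (g : ZMod p) ^ ((p - 1) / 4)) :
    jacobiSum χ χ ^ 2 = ((-1) ^ f * (a + I * b)) ^ 2 := by
  have hf : (p - 1) / 4 = f := by omega
  rw [mul_pow, pow_right_comm, neg_one_sq, one_pow, one_mul]
  exact jacobiSum_sq_eq_sq_add_I_mul hp hg hχ hab
    (even_of_sq_add_sq_eq_of_modEq (by omega) hab ha) (hf ▸ hba)

end JacobiSum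

theorem stmt11_general {F K : Type*} [Field F] [Fintype F] [Field K] [Fintype K] [Algebra F K]
    {m h t d l i : ℕ} (hK : Fintype.card K = Fintype.card F ^ m) (ht : t ∣ m) {g : Fˣ}
    (hg : ∀ u : Fˣ, u ∈ Subgroup.zpowers g) {χ : MulChar F ℂ} (hχ : χ g = I) {π : ℂ}
    (hπ : jacobiSum χ χ ^ 2 = π ^ 2) (hd : d = (m / t).gcd 4) (hl : l = t.gcd (4 / d))
    (hmt : ((m / t : ℕ) : F) ≠ 0) (hdh : d ∣ h) (hi : m / (d * t) * i ≡ h / d [MOD 4 / d]) :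
    (d = 1 ∧ l = 1 →
      (NN F K g 4 h t 0 : ℂ) = ((Fintype.card F : ℂ) ^ (t - 1) - 1) / 4) ∧
    (d = 1 ∧ l = 2 →
      (NN F K g 4 h t 0 : ℂ) =
        (1 / 4) * ((Fintype.card F : ℂ) ^ (t - 1) - 1 -
          (-1) ^ i * (Fintype.card F : ℂ) ^ ((t - 2) / 2) * (Fintype.card F - 1))) ∧
    (d = 1 ∧ l = 4 →
      (NN F K g 4 h t 0 : ℂ) =
        (1 / 4) * ((Fintype.card F : ℂ) ^ (t - 1) - 1 -
          (-1) ^ i * (Fintype.card F : ℂ) ^ ((t - 4) / 4) * (Fintype.card F - 1) *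
            ((Fintype.card F : ℂ) ^ (t / 4) + 2 * ((π ^ (t / 2) * I ^ i).re : ℂ)))) ∧
    (d = 2 ∧ l = 1 →
      (NN F K g 4 h t 0 : ℂ) = ((Fintype.card F : ℂ) ^ (t - 1) - 1) / 2) ∧
    (d = 2 ∧ l = 2 →
      (NN F K g 4 h t 0 : ℂ) =
        (1 / 2) * ((Fintype.card F : ℂ) ^ (t - 1) - 1 -
          (-1) ^ i * (Fintype.card F : ℂ) ^ ((t - 2) / 2) * (Fintype.card F - 1))) ∧
    (d = 4 ∧ l = 1 → (NN F K g 4 h t 0 : ℂ) = (Fintype.card F : ℂ) ^ (t - 1) - 1) := by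
  have hm : Module.finrank F K = m :=
    Nat.pow_right_injective Fintype.one_lt_card (Module.card_eq_pow_finrank.symm.trans hK)
  obtain ⟨E, rfl, hE⟩ := exists_intermediateField_finrank_eq F K (hm.symm ▸ ht)
  have hindex : Module.finrank E K = m / Module.finrank F E := by
    rw [← hm, ← Module.finrank_mul_finrank F E K, Nat.mul_div_cancel_left _ Module.finrank_pos]
  have h4 : 4 ∣ Fintype.card F - 1 :=
    orderOf_eq_four_of_apply_eq_I hg hχ ▸ χ.orderOf_dvd_card_sub_one F
  rw [mul_comm d, ← Nat.div_div_eq_div_mul] at hi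
  have hNN := NN_eq_NN_intermediateField hg hE hindex hmt h4 (hd ▸ hdh) (hd ▸ hi)
  have hln : l ∣ Module.finrank F E := hl ▸ Nat.gcd_dvd_left _ _
  have hdvd (k : ℕ) (hk : k ∣ Module.finrank F E) (hk4 : k ∣ 4 / d) : k ∣ l :=
    hl ▸ Nat.dvd_gcd hk hk4
  clear hl
  rw [hNN, ← hd]
  refine ⟨?_, ?_, ?_, ?_, ?_, ?_⟩ <;> rintro ⟨rfl, rfl⟩
  · exact NN_four_finrank_of_not_two_dvd hg hχ i fun h2 ↦ absurd (hdvd 2 h2) (by decide)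
  · exact NN_four_finrank_of_two_dvd_of_not_four_dvd hg hχ i hln
      fun h4 ↦ absurd (hdvd 4 h4) (by decide)
  · exact NN_four_finrank_of_four_dvd hg hχ i hln hπ
  · exact NN_two_finrank_of_not_two_dvd hg hχ i fun h2 ↦ absurd (hdvd 2 h2) (by decide)
  · exact NN_two_finrank_of_two_dvd hg hχ i hln
  · exact NN_one_finrank hg i

/-- The values of `N_t` for `s = 4`, `q = p ≡ 1 (mod 4)` and `a = 0`, assuming
`p ∤ m/t` and `d ∣ h`, in terms of `π_4 = (−1)^f·(a_4 + i·b_4)`. -/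
theorem stmt11 (p m h t d l i0 f : ℕ) [Fact p.Prime] (hm : 2 ≤ m)
    (ht : t ∣ m) (ht0 : 0 < t)
    (K : Type*) [Field K] [Fintype K] [Algebra (ZMod p) K]
    (hK : Fintype.card K = p ^ m)
    (hp : p = 4 * f + 1)
    (g : (ZMod p)ˣ) (hg : ∀ u : (ZMod p)ˣ, u ∈ Subgroup.zpowers g)
    (hh : h < 4)
    (χ4 : MulChar (ZMod p) ℂ) (hχ4o : orderOf χ4 = 4) (hχ4g : χ4 (g : ZMod p) = Complex.I)
    (a4 b4 : ℤ) (hab : a4 ^ 2 + b4 ^ 2 = (p : ℤ))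
    (ha4 : a4 ≡ -legendreSym p 2 [ZMOD 4])
    (hb4 : (b4 : ZMod p) = (a4 : ZMod p) * (g : ZMod p) ^ ((p - 1) / 4))
    (π4 : ℂ) (hπ4 : π4 = (-1 : ℂ) ^ f * ((a4 : ℂ) + Complex.I * (b4 : ℂ)))
    (hd : d = Nat.gcd (m / t) 4) (hl : l = Nat.gcd t (4 / d))
    (hpmt : ¬ p ∣ m / t) (hdh : d ∣ h)
    (hi0 : i0 < 4 / d ∧ (m / (d * t)) * i0 ≡ h / d [MOD 4 / d]) :
    (d = 1 ∧ l = 1 →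
      (NN (ZMod p) K (g : ZMod p) 4 h t 0 : ℂ) = ((p : ℂ) ^ (t - 1) - 1) / 4) ∧
    (d = 1 ∧ l = 2 →
      (NN (ZMod p) K (g : ZMod p) 4 h t 0 : ℂ) =
        (1 / 4) * ((p : ℂ) ^ (t - 1) - 1 -
          (-1 : ℂ) ^ i0 * (p : ℂ) ^ ((t - 2) / 2) * ((p : ℂ) - 1))) ∧
    (d = 1 ∧ l = 4 →
      (NN (ZMod p) K (g : ZMod p) 4 h t 0 : ℂ) =
        (1 / 4) * ((p : ℂ) ^ (t - 1) - 1 -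
          (-1 : ℂ) ^ i0 * (p : ℂ) ^ ((t - 4) / 4) * ((p : ℂ) - 1) *
            ((p : ℂ) ^ (t / 4) + 2 * ((π4 ^ (t / 2) * Complex.I ^ i0).re : ℂ)))) ∧
    (d = 2 ∧ l = 1 →
      (NN (ZMod p) K (g : ZMod p) 4 h t 0 : ℂ) = ((p : ℂ) ^ (t - 1) - 1) / 2) ∧
    (d = 2 ∧ l = 2 →
      (NN (ZMod p) K (g : ZMod p) 4 h t 0 : ℂ) =
        (1 / 2) * ((p : ℂ) ^ (t - 1) - 1 -
          (-1 : ℂ) ^ i0 * (p : ℂ) ^ ((t - 2) / 2) * ((p : ℂ) - 1))) ∧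
    (d = 4 ∧ l = 1 →
      (NN (ZMod p) K (g : ZMod p) 4 h t 0 : ℂ) = (p : ℂ) ^ (t - 1) - 1) := by
  simpa only [ZMod.card] using stmt11_general (by rwa [ZMod.card]) ht hg hχ4g
    (hπ4 ▸ jacobiSum_sq_eq_sq_of_modEq_neg_legendreSym hp hg hχ4g hab ha4 hb4) hd hl
    (by rwa [Ne, ZMod.natCast_eq_zero_iff]) hdh hi0.2

end
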